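/- Let p be a prime with p ≡ 3 (mod 4). Then ∑_{0<n<p/2} χ_p(n) = (√p/π)·(2 - χ_p(2))·L(1, χ̃_p), where the sum runs over all integers n with 0 < n < p/2 (an identity in ℂ after casting the integer left-hand side; both sides are in fact real). -/

import Mathlib

/-!
For an odd primitive character `χ` of odd modulus `N`, the Fourier transform of `χ` is a multiple of
`χ⁻¹`, the multiplier being the Gauss sum up to sign, so `L(1, χ⁻¹)` is a combination of the values
`∑ sin (2πnx) / n = π (1/2 - x)` of the sawtooth at `x = j / N`. Only the first moment `∑ j χ(j)`
survives. Pairing `j` with `N - j`, before and after the substitution `j ↦ 2j`, expresses this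
moment in two ways through sums over `0 < n < N / 2`; eliminating `∑ n χ(n)` leaves `∑ χ(n)` with
the factor `2 - χ⁻¹(2)`.

For the Legendre symbol with `p ≡ 3 mod 4` the Gauss sum is `√p i`. Its sign comes from the
Landsberg–Schaar reciprocity of quadratic exponential sums, which is the inversion formula of the
theta function compared at two cusps that it exchanges.
-/

section ThetaAsymptotics

open Complex Filter Topology ZMod
open scoped Real

lemma summable_exp_neg_pi_mul_sq_add {a : ℂ} (ha : 0 < a.re) (z : ℂ) :
    Summable fun n : ℤ ↦ cexp (-π * a * n ^ 2 + 2 * π * z * n) := by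
  refine ((summable_jacobiTheta₂_term_iff (-I * z) (I * a)).2 (by simpa using ha)).congr fun n ↦ ?_
  rw [jacobiTheta₂_term]
  congr 1
  linear_combination (π * a * n ^ 2 - 2 * π * z * n) * I_sq

lemma norm_exp_neg_pi_div_mul_sq (a : ℂ) (x : ℝ) :
    ‖cexp (-π / a * x ^ 2)‖ = Real.exp (-π * a⁻¹.re * x ^ 2) := by
  have h : -π / a * x ^ 2 = ((-π * x ^ 2 : ℝ) : ℂ) * a⁻¹ := by push_cast; ring
  rw [norm_exp, h, re_ofReal_mul]
  ring_nf

lemma re_pos_of_inv_re_pos {z : ℂ} (hz : 0 < z⁻¹.re) : 0 < z.re := by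
  rw [← inv_inv z, inv_re]
  exact div_pos hz (normSq_pos.2 fun h ↦ by simp [h] at hz)

variable {ι : Type*} {l : Filter ι} {a : ι → ℂ}

lemma tendsto_exp_neg_pi_div_mul_sq (ha : Tendsto (fun i ↦ (a i)⁻¹.re) l atTop) (x : ℝ) :
    Tendsto (fun i ↦ cexp (-π / a i * x ^ 2)) l (𝓝 (if x = 0 then 1 else 0)) := by
  split_ifs with hx
  · simpa [hx] using tendsto_const_nhds
  · have hπ : -π * x ^ 2 < 0 := by have := Real.pi_pos; have := sq_pos_of_ne_zero hx; nlinarith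
    rw [tendsto_zero_iff_norm_tendsto_zero]
    refine (Real.tendsto_exp_atBot.comp (ha.const_mul_atTop_of_neg hπ)).congr fun i ↦ ?_
    rw [norm_exp_neg_pi_div_mul_sq, Function.comp_apply]
    ring_nf

lemma tendsto_tsum_exp_neg_pi_div_mul_sub_sq (ha : Tendsto (fun i ↦ (a i)⁻¹.re) l atTop) (x : ℝ) :
    Tendsto (fun i ↦ ∑' n : ℤ, cexp (-π / a i * (n - x : ℝ) ^ 2)) l
      (𝓝 (if Int.fract x = 0 then 1 else 0)) := by
  have hlim : (if Int.fract x = 0 then 1 else 0 : ℂ) =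
      ∑' n : ℤ, if (n - x : ℝ) = 0 then 1 else 0 := by
    split_ifs with hx
    · obtain ⟨m, rfl⟩ := Int.fract_eq_zero_iff.1 hx
      simp [sub_eq_zero]
    · have hne (n : ℤ) : (n - x : ℝ) ≠ 0 := fun h ↦
        hx (Int.fract_eq_zero_iff.2 ⟨n, sub_eq_zero.1 h⟩)
      simp [hne]
  have hsummable : Summable fun n : ℤ ↦ Real.exp (-π * (n - x) ^ 2) := by
    refine ((summable_exp_neg_pi_mul_sq_add (a := 1) (by simp) x).norm.mul_left
      (Real.exp (-π * x ^ 2))).congr fun n ↦ ?_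
    rw [norm_exp, ← Real.exp_add]
    norm_cast
    push_cast
    ring_nf
  rw [hlim]
  refine tendsto_tsum_of_dominated_convergence hsummable
    (fun n ↦ tendsto_exp_neg_pi_div_mul_sq ha _) ?_
  filter_upwards [ha.eventually_ge_atTop 1] with i hi n
  rw [norm_exp_neg_pi_div_mul_sq]
  gcongr
  nlinarith [Real.pi_pos]

variable {N : ℕ} [NeZero N]

lemma tsum_mul_exp_neg_pi_mul_sq_eq_sum_dft {a : ℂ} (ha : 0 < a.re) (Φ : ZMod N → ℂ) :
    a ^ (1 / 2 : ℂ) * ∑' n : ℤ, Φ n * cexp (-π * a * n ^ 2) =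
      (N : ℂ)⁻¹ * ∑ j, 𝓕 Φ j * ∑' n : ℤ, cexp (-π / a * (n - (j.val / N : ℝ) : ℝ) ^ 2) := by
  have ha0 : a ^ (1 / 2 : ℂ) ≠ 0 := by
    simp only [ne_eq, cpow_eq_zero_iff, not_and_or]
    exact .inl <| by rintro rfl; simp at ha
  have hpoisson (j : ZMod N) : ∑' n : ℤ, cexp (-π / a * (n - (j.val / N : ℝ) : ℝ) ^ 2) =
      a ^ (1 / 2 : ℂ) * ∑' n : ℤ, cexp (-π * a * n ^ 2 + 2 * π * (I * (j.val / N)) * n) := by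
    rw [Complex.tsum_exp_neg_quadratic ha, ← mul_assoc, mul_one_div_cancel ha0, one_mul]
    refine tsum_congr fun n ↦ ?_
    congr 2
    push_cast
    linear_combination (-2 * n * (j.val / N : ℂ) + (j.val / N : ℂ) ^ 2 * (1 - I ^ 2)) * I_sq
  have hinv (n : ℤ) : Φ n * cexp (-π * a * n ^ 2) = (N : ℂ)⁻¹ * ∑ j, 𝓕 Φ j *
      cexp (-π * a * n ^ 2 + 2 * π * (I * (j.val / N)) * n) := by
    conv_lhs => rw [← dft.symm_apply_apply Φ, ZMod.invDFT_apply]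
    rw [smul_eq_mul, mul_assoc, Finset.sum_mul]
    congr 1
    refine Finset.sum_congr rfl fun j _ ↦ ?_
    have hj : j * n = ((j.val * n : ℤ) : ZMod N) := by simp
    rw [hj, ZMod.stdAddChar_coe, exp_add, smul_eq_mul]
    push_cast
    ring_nf
  simp_rw [hpoisson, hinv, tsum_mul_left]
  rw [Summable.tsum_finsetSum fun j _ ↦ (summable_exp_neg_pi_mul_sq_add ha _).mul_left _]
  simp_rw [tsum_mul_left, Finset.mul_sum]
  refine Finset.sum_congr rfl fun j _ ↦ ?_
  ring

lemma tendsto_cpow_mul_tsum_mul_exp_neg_pi_mul_sq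
    (ha : Tendsto (fun i ↦ (a i)⁻¹.re) l atTop) (Φ : ZMod N → ℂ) :
    Tendsto (fun i ↦ a i ^ (1 / 2 : ℂ) * ∑' n : ℤ, Φ n * cexp (-π * a i * n ^ 2)) l
      (𝓝 ((N : ℂ)⁻¹ * ∑ j, Φ j)) := by
  have hN : (0 : ℝ) < N := by exact_mod_cast NeZero.pos N
  have hfract (j : ZMod N) : Int.fract (j.val / N : ℝ) = 0 ↔ j = 0 := by
    rw [Int.fract_eq_self.2 ⟨by positivity, (div_lt_one hN).2 (by exact_mod_cast j.val_lt)⟩]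
    rw [div_eq_zero_iff, or_iff_left hN.ne', Nat.cast_eq_zero, ZMod.val_eq_zero]
  have hlim : (N : ℂ)⁻¹ * ∑ j, Φ j =
      (N : ℂ)⁻¹ * ∑ j : ZMod N, 𝓕 Φ j * if Int.fract (j.val / N : ℝ) = 0 then 1 else 0 := by
    simp [-ZMod.natCast_val, hfract, ZMod.dft_apply_zero]
  rw [hlim]
  refine ((tendsto_finsetSum _ fun j _ ↦
    (tendsto_tsum_exp_neg_pi_div_mul_sub_sq ha _).const_mul _).const_mul _).congr' ?_
  filter_upwards [ha.eventually_gt_atTop 0] with i hi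
  rw [tsum_mul_exp_neg_pi_mul_sq_eq_sum_dft (re_pos_of_inv_re_pos hi)]

lemma sum_zmod_eq_sum_range {M : Type*} [AddCommMonoid M] (F : ZMod N → M) :
    ∑ j, F j = ∑ n ∈ Finset.range N, F n := by
  refine Finset.sum_bij' (fun j _ ↦ j.val) (fun n _ ↦ (n : ZMod N)) ?_ (by simp) (by simp) ?_
    (by simp)
  · exact fun j _ ↦ Finset.mem_range.2 j.val_lt
  · exact fun n hn ↦ ZMod.val_cast_of_lt (Finset.mem_range.1 hn)

lemma tendsto_cpow_mul_tsum_periodic_mul_exp_neg_pi_mul_sq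
    (ha : Tendsto (fun i ↦ (a i)⁻¹.re) l atTop) {f : ℤ → ℂ} (hf : Function.Periodic f N) :
    Tendsto (fun i ↦ a i ^ (1 / 2 : ℂ) * ∑' n : ℤ, f n * cexp (-π * a i * n ^ 2)) l
      (𝓝 ((N : ℂ)⁻¹ * ∑ n ∈ Finset.range N, f n)) := by
  have hlift (n : ℤ) : f ((n : ZMod N).val : ℤ) = f n := by
    rw [ZMod.val_intCast, Int.emod_def, mul_comm]
    exact hf.sub_int_mul_eq _
  have h := tendsto_cpow_mul_tsum_mul_exp_neg_pi_mul_sq ha fun j : ZMod N ↦ f (j.val : ℤ)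
  simp_rw [sum_zmod_eq_sum_range, hlift, ← Int.cast_natCast (R := ZMod N), hlift] at h
  exact h

end ThetaAsymptotics

section LandsbergSchaar

open Complex Filter Topology
open scoped Real

lemma mul_cpow_of_re_nonneg_of_re_pos {x y : ℂ} (hx₀ : x ≠ 0) (hx : 0 ≤ x.re) (hy : 0 < y.re)
    (s : ℂ) : (x * y) ^ s = x ^ s * y ^ s := by
  have hy₀ : y ≠ 0 := by rintro rfl; simp at hy
  have hargx := abs_le.1 (abs_arg_le_pi_div_two_iff.2 hx)
  have hargy := abs_lt.1 (abs_arg_lt_pi_div_two_iff.2 (.inl hy))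
  have harg : arg x + arg y ∈ Set.Ioc (-π) π := ⟨by linarith, by linarith⟩
  rw [cpow_def_of_ne_zero (mul_ne_zero hx₀ hy₀), log_mul hx₀ hy₀ harg, add_mul, exp_add,
    cpow_def_of_ne_zero hx₀, cpow_def_of_ne_zero hy₀]

lemma I_mul_ofReal_cpow_one_half {c : ℝ} (hc : 0 < c) :
    (I * c) ^ (1 / 2 : ℂ) = cexp (π * I / 4) * √c := by
  rw [mul_cpow_of_re_nonneg_of_re_pos I_ne_zero (by simp) (by simpa), cpow_def_of_ne_zero I_ne_zero,
    log_I, Real.sqrt_eq_rpow, ofReal_cpow hc.le]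
  push_cast
  ring_nf

-- For `τ = c + I ε` the value of `w` makes `-1 / τ = -1 / c + I w`: as `ε → 0`, inversion exchanges
-- the cusps `c` and `-1 / c`.
lemma cpow_mul_tsum_exp_pi_mul_I_mul_sq {c ε : ℝ} (hc : 0 < c) (hε : 0 < ε) {w : ℂ}
    (hw : w⁻¹ = I * c * (ε - I * c) / ε) :
    (ε : ℂ) ^ (1 / 2 : ℂ) * ∑' n : ℤ, cexp (π * I * c * n ^ 2) * cexp (-π * ε * n ^ 2) =
      (I * c) ^ (1 / 2 : ℂ) *
        (w ^ (1 / 2 : ℂ) * ∑' n : ℤ, cexp (-π * I / c * n ^ 2) * cexp (-π * w * n ^ 2)) := by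
  set a : ℂ := ε - I * c with ha
  have hε₀ : (ε : ℂ) ≠ 0 := by exact_mod_cast hε.ne'
  have hc₀ : (c : ℂ) ≠ 0 := by exact_mod_cast hc.ne'
  have hIc : I * c ≠ 0 := mul_ne_zero I_ne_zero hc₀
  have hare : 0 < a.re := by simpa [ha] using hε
  have ha₀ : a ≠ 0 := by rintro h; simp [h] at hare
  have ha' : a ^ (1 / 2 : ℂ) ≠ 0 := by simp [cpow_eq_zero_iff, ha₀]
  have hyre : 0 < (I * c * a).re := by simpa [ha] using hc.ne'
  have hwre : 0 < w.re := by
    refine re_pos_of_inv_re_pos ?_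
    rw [hw, div_ofReal_re]
    exact div_pos hyre hε
  have hw₀ : w = ε / (I * c * a) := by rw [← inv_inv w, hw, inv_div]
  have hεw : (ε : ℂ) = I * c * a * w := by rw [hw₀]; field_simp
  have hinv : 1 / a = w + I / c := by
    rw [hw₀]
    field_simp
    rw [ha]
    linear_combination (I * c - ε) * I_sq
  have hroot : (ε : ℂ) ^ (1 / 2 : ℂ) =
      (I * c) ^ (1 / 2 : ℂ) * a ^ (1 / 2 : ℂ) * w ^ (1 / 2 : ℂ) := by
    rw [hεw, mul_cpow_of_re_nonneg_of_re_pos (mul_ne_zero hIc ha₀) hyre.le hwre,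
      mul_cpow_of_re_nonneg_of_re_pos hIc (by simp) hare]
  have hleft (n : ℤ) : cexp (π * I * c * n ^ 2) * cexp (-π * ε * n ^ 2) =
      cexp (-π * a * n ^ 2) := by
    rw [← exp_add, ha]; ring_nf
  have hright (n : ℤ) : cexp (-π * I / c * n ^ 2) * cexp (-π * w * n ^ 2) =
      cexp (-π / a * n ^ 2) := by
    rw [← exp_add, div_eq_mul_one_div _ a, hinv]; ring_nf
  simp_rw [hleft, hright]
  rw [Complex.tsum_exp_neg_mul_int_sq hare, hroot]
  field_simp

lemma sum_exp_pi_mul_I_mul_sq_reciprocity {c : ℝ} (hc : 0 < c) {M N : ℕ} [NeZero M] [NeZero N]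
    (hM : Function.Periodic (fun n : ℤ ↦ cexp (π * I * c * n ^ 2)) M)
    (hN : Function.Periodic (fun n : ℤ ↦ cexp (-π * I / c * n ^ 2)) N) :
    (M : ℂ)⁻¹ * ∑ n ∈ Finset.range M, cexp (π * I * c * n ^ 2) =
      (I * c) ^ (1 / 2 : ℂ) *
        ((N : ℂ)⁻¹ * ∑ n ∈ Finset.range N, cexp (-π * I / c * n ^ 2)) := by
  set w : ℝ → ℂ := fun ε ↦ (I * c * (ε - I * c) / ε)⁻¹ with hw
  have htop := tendsto_inv_nhdsGT_zero (𝕜 := ℝ)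
  have hε_top : Tendsto (fun ε : ℝ ↦ ((ε : ℂ)⁻¹).re) (𝓝[>] 0) atTop := by
    simpa [← ofReal_inv] using htop
  have hw_top : Tendsto (fun ε ↦ ((w ε)⁻¹).re) (𝓝[>] 0) atTop := by
    refine (htop.const_mul_atTop (sq_pos_of_pos hc)).congr fun ε ↦ ?_
    rw [hw, inv_inv, div_ofReal_re]
    simp only [mul_re, mul_im, I_re, I_im, sub_re, sub_im, ofReal_re, ofReal_im]
    ring
  have hlimM := tendsto_cpow_mul_tsum_periodic_mul_exp_neg_pi_mul_sq hε_top hM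
  have hlimN := (tendsto_cpow_mul_tsum_periodic_mul_exp_neg_pi_mul_sq hw_top hN).const_mul
    ((I * c) ^ (1 / 2 : ℂ))
  refine tendsto_nhds_unique hlimM (hlimN.congr' ?_)
  filter_upwards [self_mem_nhdsWithin] with ε hε
  exact (cpow_mul_tsum_exp_pi_mul_I_mul_sq hc hε (inv_inv _)).symm

theorem landsberg_schaar {p q : ℕ} (hp : 0 < p) (hq : 0 < q) :
    1 / √p * ∑ n ∈ Finset.range p, cexp (2 * π * I * q * n ^ 2 / p) =
      cexp (π * I / 4) / √(2 * q) *
        ∑ n ∈ Finset.range (2 * q), cexp (-π * I * p * n ^ 2 / (2 * q)) := by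
  have : NeZero p := ⟨hp.ne'⟩
  have : NeZero (2 * q) := ⟨by lia⟩
  have hp₀ : (p : ℂ) ≠ 0 := by exact_mod_cast hp.ne'
  have hq₀ : (q : ℂ) ≠ 0 := by exact_mod_cast hq.ne'
  set c : ℝ := 2 * q / p with hc
  have hcpos : 0 < c := by positivity
  have hcC : (c : ℂ) = 2 * q / p := by rw [hc]; push_cast; rfl
  have hperp : Function.Periodic (fun n : ℤ ↦ cexp (π * I * c * n ^ 2)) p := fun n ↦ by
    refine exp_eq_exp_iff_exists_int.2 ⟨q * (2 * n + p), ?_⟩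
    rw [hcC]; push_cast; field_simp; ring
  have hperq : Function.Periodic (fun n : ℤ ↦ cexp (-π * I / c * n ^ 2)) (2 * q : ℕ) := fun n ↦ by
    refine exp_eq_exp_iff_exists_int.2 ⟨-(p * (n + q)), ?_⟩
    rw [hcC]; push_cast; field_simp; ring
  have hrec := sum_exp_pi_mul_I_mul_sq_reciprocity hcpos hperp hperq
  have hexpp (n : ℕ) : π * I * c * n ^ 2 = 2 * π * I * q * n ^ 2 / p := by rw [hcC]; ring
  have hexpq (n : ℕ) : -π * I / c * n ^ 2 = -π * I * p * n ^ 2 / (2 * q) := by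
    rw [hcC]; field_simp
  have hsqrtp : (p : ℂ) = √p * √p := by norm_cast; exact (Real.mul_self_sqrt p.cast_nonneg).symm
  have hsqrtq : ((2 * q : ℕ) : ℂ) = √(2 * q) * √(2 * q) := by
    norm_cast; exact (Real.mul_self_sqrt (by positivity)).symm
  have hsqrtp₀ : (√p : ℂ) ≠ 0 := by exact_mod_cast (Real.sqrt_pos.2 (by positivity)).ne'
  have hsqrtq₀ : (√(2 * q) : ℂ) ≠ 0 := ofReal_ne_zero.2 (Real.sqrt_pos.2 (by positivity)).ne'
  simp_rw [hexpp, hexpq, I_mul_ofReal_cpow_one_half hcpos] at hrec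
  rw [hc, Real.sqrt_div (by positivity), ofReal_div] at hrec
  calc 1 / √p * ∑ n ∈ Finset.range p, cexp (2 * π * I * q * n ^ 2 / p)
    _ = √p * ((p : ℂ)⁻¹ * ∑ n ∈ Finset.range p, cexp (2 * π * I * q * n ^ 2 / p)) := by
      generalize ∑ n ∈ Finset.range p, cexp (2 * π * I * q * n ^ 2 / p) = S
      rw [hsqrtp]; field_simp
    _ = _ := by rw [hrec, hsqrtq]; field_simp

end LandsbergSchaar

section QuadraticGaussSum

open Complex
open scoped Real

lemma exp_pi_mul_I_div_four_div_sqrt_two : cexp (π * I / 4) / √2 = (1 + I) / 2 := by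
  have h : π * I / 4 = (π / 4 : ℝ) * I := by push_cast; ring
  rw [h, exp_mul_I, ← ofReal_cos, ← ofReal_sin, Real.cos_pi_div_four, Real.sin_pi_div_four]
  push_cast
  field_simp

lemma sum_stdAddChar_sq (N : ℕ) [NeZero N] :
    ∑ x : ZMod N, ZMod.stdAddChar (x ^ 2) = √N * ((1 + I) / 2) * (1 + (-I) ^ N) := by
  have hN : (√N : ℂ) ≠ 0 := by
    exact_mod_cast (Real.sqrt_pos.2 (Nat.cast_pos.2 (NeZero.pos N))).ne'
  have hchar (n : ℕ) : ZMod.stdAddChar ((n : ZMod N) ^ 2) = cexp (2 * π * I * n ^ 2 / N) := by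
    have h := ZMod.stdAddChar_coe (N := N) ((n : ℤ) ^ 2)
    push_cast at h
    exact h
  have hI : cexp (-π * I * N / 2) = (-I) ^ N := by
    rw [← exp_neg_pi_div_two_mul_I, ← exp_nat_mul]
    ring_nf
  have h := landsberg_schaar (NeZero.pos N) one_pos
  simp only [Nat.cast_one, mul_one, exp_pi_mul_I_div_four_div_sqrt_two, Finset.sum_range_succ,
    Finset.sum_range_zero, CharP.cast_eq_zero, ne_eq, OfNat.ofNat_ne_zero, not_false_eq_true,
    zero_pow, mul_zero, zero_div, exp_zero, zero_add, one_pow, hI] at h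
  rw [sum_zmod_eq_sum_range]
  simp_rw [hchar]
  rw [mul_assoc (√N : ℂ), ← h]
  field_simp

lemma gaussSum_quadraticChar_ringHomComp {F R : Type*} [Field F] [Fintype F] [DecidableEq F]
    [CommRing R] [IsDomain R] (hF : ringChar F ≠ 2) {ψ : AddChar F R} (hψ : ψ ≠ 1) :
    gaussSum ((quadraticChar F).ringHomComp (Int.castRingHom R)) ψ = ∑ x, ψ (x ^ 2) := by
  have hcard (y : F) :
      ((Finset.univ.filter fun x : F ↦ x ^ 2 = y).card : R) = quadraticChar F y + 1 := by
    have h := quadraticChar_card_sqrts hF y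
    rw [Set.toFinset_ofPred] at h
    exact_mod_cast congrArg (Int.cast : ℤ → R) h
  have hfiber (y : F) : ∑ x with x ^ 2 = y, ψ (x ^ 2) = quadraticChar F y * ψ y + ψ y := by
    rw [Finset.sum_congr rfl fun x hx ↦ congrArg ψ (Finset.mem_filter.1 hx).2, Finset.sum_const,
      nsmul_eq_mul, hcard, add_one_mul]
  rw [← Finset.sum_fiberwise Finset.univ fun x : F ↦ x ^ 2]
  simp_rw [hfiber]
  rw [Finset.sum_add_distrib, AddChar.sum_eq_zero_of_ne_one hψ, add_zero]
  rfl

end QuadraticGaussSum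

section Polylogarithm

open Complex Filter Topology Set MeasureTheory Asymptotics

/-- The Bose–Einstein kernel `w / (e ^ t - w) = ∑_{n ≥ 1} w ^ n e ^ (-n t)`, whose Mellin transform
is `Γ(s) Li_s(w)`. It is written in terms of `e ^ (-t)` so that it extends continuously to
`t = ∞`. -/
noncomputable def polylogKernel (w : ℂ) (t : ℝ) : ℂ :=
  w * Real.exp (-t) / (1 - w * Real.exp (-t))

variable {w : ℂ}

lemma one_sub_mul_exp_neg_re_pos (hw : w.re < 1) {t : ℝ} (ht : 0 ≤ t) :
    0 < (1 - w * Real.exp (-t)).re := by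
  have hexp : Real.exp (-t) ≤ 1 := by simpa using ht
  rw [sub_re, one_re, re_mul_ofReal]
  rcases le_or_gt w.re 0 with hnonpos | hpos
  · linarith [mul_nonpos_of_nonpos_of_nonneg hnonpos (Real.exp_pos (-t)).le]
  · linarith [mul_le_of_le_one_right hpos.le hexp]

lemma tendsto_one_sub_mul_exp_neg_atTop (w : ℂ) :
    Tendsto (fun t : ℝ ↦ 1 - w * Real.exp (-t)) atTop (𝓝 1) := by
  have h := (continuous_ofReal.tendsto 0).comp Real.tendsto_exp_neg_atTop_nhds_zero
  simpa [Function.comp_def] using (h.const_mul w).const_sub 1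

lemma continuousOn_polylogKernel (hw : w.re < 1) : ContinuousOn (polylogKernel w) (Ici 0) := by
  refine ContinuousOn.div (by fun_prop) (by fun_prop) fun t ht h ↦ ?_
  have hre := one_sub_mul_exp_neg_re_pos hw ht
  rw [h, zero_re] at hre
  exact hre.false

lemma polylogKernel_isBigO_atTop (w : ℂ) :
    polylogKernel w =O[atTop] fun t ↦ Real.exp (-1 * t) := by
  have hquot : (fun t : ℝ ↦ w / (1 - w * Real.exp (-t))) =O[atTop] fun _ ↦ (1 : ℝ) :=
    (tendsto_const_nhds.div (tendsto_one_sub_mul_exp_neg_atTop w) one_ne_zero).isBigO_one ℝ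
  have hexp : (fun t : ℝ ↦ (Real.exp (-t) : ℂ)) =O[atTop] fun t ↦ Real.exp (-1 * t) :=
    isBigO_of_le _ fun t ↦ by rw [norm_real, neg_one_mul]
  refine (hquot.mul hexp).congr (fun t ↦ ?_) fun t ↦ one_mul _
  rw [polylogKernel]
  ring

lemma polylogKernel_isBigO_nhdsGT_zero (hw : w.re < 1) :
    polylogKernel w =O[𝓝[>] 0] fun t ↦ t ^ (-(0 : ℝ)) := by
  have h : Tendsto (polylogKernel w) (𝓝[>] 0) (𝓝 (polylogKernel w 0)) :=
    (continuousOn_polylogKernel hw 0 self_mem_Ici).mono Ioi_subset_Ici_self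
  simpa using h.isBigO_one ℝ

lemma locallyIntegrableOn_polylogKernel (hw : w.re < 1) :
    LocallyIntegrableOn (polylogKernel w) (Ioi 0) :=
  ((continuousOn_polylogKernel hw).mono Ioi_subset_Ici_self).locallyIntegrableOn measurableSet_Ioi

lemma differentiableAt_mellin_polylogKernel (hw : w.re < 1) {s : ℂ} (hs : 0 < s.re) :
    DifferentiableAt ℂ (mellin (polylogKernel w)) s :=
  mellin_differentiableAt_of_isBigO_rpow_exp one_pos (locallyIntegrableOn_polylogKernel hw)
    (polylogKernel_isBigO_atTop w) (polylogKernel_isBigO_nhdsGT_zero hw) hs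

lemma integrableOn_polylogKernel (hw : w.re < 1) : IntegrableOn (polylogKernel w) (Ioi 0) := by
  simpa [MellinConvergent] using mellinConvergent_of_isBigO_rpow_exp (s := 1) one_pos
    (locallyIntegrableOn_polylogKernel hw) (polylogKernel_isBigO_atTop w)
    (polylogKernel_isBigO_nhdsGT_zero hw) (by simp)

lemma hasDerivAt_log_one_sub_mul_exp_neg (hw : w.re < 1) {t : ℝ} (ht : 0 ≤ t) :
    HasDerivAt (fun t : ℝ ↦ log (1 - w * Real.exp (-t))) (polylogKernel w t) t := by
  have hexp : HasDerivAt (fun t : ℝ ↦ (Real.exp (-t) : ℂ)) ((-Real.exp (-t) : ℝ) : ℂ) t := by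
    simpa using (hasDerivAt_neg t).exp.ofReal_comp
  refine (((hexp.const_mul w).const_sub 1).clog_real
    (.inl (one_sub_mul_exp_neg_re_pos hw ht))).congr_deriv ?_
  rw [polylogKernel]
  push_cast
  ring

lemma mellin_polylogKernel_one (hw : w.re < 1) :
    mellin (polylogKernel w) 1 = -log (1 - w) := by
  have hlim : Tendsto (fun t : ℝ ↦ log (1 - w * Real.exp (-t))) atTop (𝓝 0) := by
    simpa using (tendsto_one_sub_mul_exp_neg_atTop w).clog (by simp)
  have h := integral_Ioi_of_hasDerivAt_of_tendsto'
    (fun t ht ↦ hasDerivAt_log_one_sub_mul_exp_neg hw ht) (integrableOn_polylogKernel hw) hlim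
  simpa [mellin] using h

lemma hasSum_mellin_polylogKernel (hw : ‖w‖ ≤ 1) {s : ℂ} (hs : 1 < s.re) :
    HasSum (fun n : ℕ ↦ Gamma s * w ^ (n + 1) / ((n + 1 : ℝ) : ℂ) ^ s)
      (mellin (polylogKernel w) s) := by
  refine hasSum_mellin (fun n ↦ .inr (by positivity)) (zero_lt_one.trans hs) (fun t ht ↦ ?_) ?_
  · have hlt : ‖w * Real.exp (-t)‖ < 1 := by
      rw [norm_mul, norm_real, Real.norm_of_nonneg (Real.exp_pos _).le]
      exact mul_lt_one_of_nonneg_of_lt_one_right hw (Real.exp_pos _).le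
        (Real.exp_lt_one_iff.2 (neg_neg_of_pos ht))
    have h := (hasSum_geometric_of_norm_lt_one hlt).mul_left (w * Real.exp (-t))
    rw [← div_eq_mul_inv] at h
    refine h.congr_fun fun n ↦ ?_
    have hexp : Real.exp (-(n + 1 : ℝ) * t) = Real.exp (-t) ^ (n + 1) := by
      rw [← Real.exp_nat_mul]; push_cast; ring_nf
    rw [hexp]
    push_cast
    ring
  · refine .of_nonneg_of_le (fun n ↦ by positivity) (fun n ↦ ?_)
      ((summable_nat_add_iff 1).2 (Real.summable_one_div_nat_rpow.2 hs))
    push_cast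
    gcongr
    simpa using pow_le_one₀ (norm_nonneg w) hw

end Polylogarithm

section SawtoothValues

open Complex Filter Topology Set HurwitzZeta
open scoped Real

lemma norm_exp_two_pi_mul_I_mul (x : ℝ) : ‖cexp (2 * π * I * x)‖ = 1 := by
  rw [show 2 * π * I * x = (2 * π * x : ℝ) * I by push_cast; ring, norm_exp_ofReal_mul_I]

lemma one_sub_exp_two_pi_mul_I_mul (x : ℝ) :
    1 - cexp (2 * π * I * x) = (2 * Real.sin (π * x) : ℝ) * cexp ((π * (x - 1 / 2) : ℝ) * I) := by
  have hexp : 2 * π * I * x = (2 * (π * x) : ℝ) * I := by push_cast; ring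
  have hshift : (π * (x - 1 / 2) : ℝ) = π * x - π / 2 := by ring
  rw [hexp, hshift, exp_mul_I, exp_mul_I, ← ofReal_cos, ← ofReal_sin, ← ofReal_cos, ← ofReal_sin,
    Real.cos_two_mul, Real.sin_two_mul, Real.cos_sub_pi_div_two, Real.sin_sub_pi_div_two]
  push_cast
  linear_combination (-2) * sin_sq_add_cos_sq (π * x : ℂ)

variable {x : ℝ}

lemma sin_pi_mul_pos (hx : x ∈ Ioo 0 1) : 0 < Real.sin (π * x) :=
  Real.sin_pos_of_mem_Ioo ⟨mul_pos Real.pi_pos hx.1, mul_lt_of_lt_one_right Real.pi_pos hx.2⟩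

lemma exp_two_pi_mul_I_mul_re_lt_one (hx : x ∈ Ioo 0 1) : (cexp (2 * π * I * x)).re < 1 := by
  rw [show 2 * π * I * x = (2 * (π * x) : ℝ) * I by push_cast; ring, exp_ofReal_mul_I_re,
    Real.cos_two_mul']
  nlinarith [sin_pi_mul_pos hx, Real.sin_sq_add_cos_sq (π * x)]

lemma log_one_sub_exp_two_pi_mul_I_mul (hx : x ∈ Ioo 0 1) :
    log (1 - cexp (2 * π * I * x)) =
      Real.log (2 * Real.sin (π * x)) + (π * (x - 1 / 2) : ℝ) * I := by
  have hsin := sin_pi_mul_pos hx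
  rw [one_sub_exp_two_pi_mul_I_mul, log_ofReal_mul (by positivity) (exp_ne_zero _), log_exp]
  · rw [im_ofReal_mul, I_im]; nlinarith [Real.pi_pos, hx.1]
  · rw [im_ofReal_mul, I_im]; nlinarith [Real.pi_pos, hx.2]

lemma Gamma_mul_expZeta_eq_mellin (x : ℝ) {s : ℂ} (hs : 1 < s.re) :
    Gamma s * expZeta x s = mellin (polylogKernel (cexp (2 * π * I * x))) s := by
  have hs₀ : s ≠ 0 := ne_zero_of_one_lt_re hs
  have hzeta := ((hasSum_nat_add_iff' 1).2 (hasSum_expZeta_of_one_lt_re x hs)).mul_left (Gamma s)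
  simp only [Finset.sum_range_one, Nat.cast_zero, mul_zero, zero_cpow hs₀, div_zero, sub_zero]
    at hzeta
  refine hzeta.unique
    ((hasSum_mellin_polylogKernel (norm_exp_two_pi_mul_I_mul x).le hs).congr_fun fun n ↦ ?_)
  rw [← Complex.exp_nat_mul]
  push_cast
  ring_nf

lemma expZeta_one (hx : x ∈ Ioo 0 1) :
    expZeta x 1 = -log (1 - cexp (2 * π * I * x)) := by
  have hx₀ : (x : UnitAddCircle) ≠ 0 := by
    rw [Ne, AddCircle.coe_eq_zero_iff_of_mem_Ico ⟨hx.1.le, by simpa using hx.2⟩]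
    exact hx.1.ne'
  have hre := exp_two_pi_mul_I_mul_re_lt_one hx
  have hzeta : ContinuousAt (fun s ↦ Gamma s * expZeta x s) 1 :=
    differentiableAt_Gamma_one.continuousAt.mul
      (differentiable_expZeta_of_ne_zero hx₀ 1).continuousAt
  have hmellin := (differentiableAt_mellin_polylogKernel (s := 1) hre (by simp)).continuousAt
  have hright : Tendsto (fun s : ℝ ↦ (s : ℂ)) (𝓝[>] 1) (𝓝 1) :=
    (continuous_ofReal.tendsto' 1 1 ofReal_one).mono_left nhdsWithin_le_nhds
  have hlim : Tendsto (fun s : ℝ ↦ Gamma s * expZeta x s) (𝓝[>] 1) (𝓝 _) :=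
    (hmellin.tendsto.comp hright).congr' <| by
      filter_upwards [self_mem_nhdsWithin] with s hs
      exact (Gamma_mul_expZeta_eq_mellin x (by simpa using hs)).symm
  have h := tendsto_nhds_unique (hzeta.tendsto.comp hright) hlim
  rwa [Gamma_one, one_mul, mellin_polylogKernel_one hre] at h

theorem sinZeta_one (hx : x ∈ Ioo 0 1) : sinZeta x 1 = π * (1 / 2 - x) := by
  have hneg : (-x : UnitAddCircle) = (1 - x : ℝ) := by
    rw [AddCircle.coe_sub, AddCircle.coe_period, zero_sub]
  have hx' : 1 - x ∈ Ioo 0 1 := ⟨sub_pos.2 hx.2, sub_lt_self 1 hx.1⟩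
  have hsin : Real.sin (π * (1 - x)) = Real.sin (π * x) := by
    rw [mul_one_sub, Real.sin_pi_sub]
  rw [sinZeta_eq, hneg, expZeta_one hx, expZeta_one hx', log_one_sub_exp_two_pi_mul_I_mul hx,
    log_one_sub_exp_two_pi_mul_I_mul hx', hsin]
  push_cast
  field_simp
  ring

end SawtoothValues

section OddLFunctions

open Complex HurwitzZeta
open scoped Real ZMod

variable {N : ℕ} [NeZero N]

lemma LFunction_dft_of_odd {Φ : ZMod N → ℂ} (hΦ : Φ.Odd) (s : ℂ) :
    ZMod.LFunction (𝓕 Φ) s = -I * ∑ j, Φ j * sinZeta (ZMod.toAddCircle j) s := by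
  have hneg : ∑ j, Φ j * expZeta (ZMod.toAddCircle j) s
      = -∑ j, Φ j * expZeta (ZMod.toAddCircle (-j)) s := by
    rw [← Finset.sum_neg_distrib]
    exact Fintype.sum_equiv (.neg _) _ _ fun j ↦ by simp [hΦ j]
  simp_rw [sinZeta_eq, ← map_neg, mul_div_assoc', mul_sub]
  rw [← Finset.sum_div, Finset.sum_sub_distrib, hneg, ZMod.LFunction_dft Φ (.inl hΦ.map_zero)]
  field_simp
  ring

lemma sinZeta_toAddCircle_one {j : ZMod N} (hj : j ≠ 0) :
    sinZeta (ZMod.toAddCircle j) 1 = π / 2 - π / N * j.val := by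
  have hN : (0 : ℝ) < N := Nat.cast_pos.2 (NeZero.pos N)
  have hval : (j.val / N : ℝ) ∈ Set.Ioo 0 1 :=
    ⟨div_pos (Nat.cast_pos.2 (ZMod.val_pos.2 hj)) hN,
      (div_lt_one hN).2 (Nat.cast_lt.2 j.val_lt)⟩
  rw [ZMod.toAddCircle_apply, sinZeta_one hval]
  push_cast
  ring

lemma LFunction_dft_one_of_odd {Φ : ZMod N → ℂ} (hΦ : Φ.Odd) :
    ZMod.LFunction (𝓕 Φ) 1 = π * I / N * ∑ j, j.val * Φ j := by
  have hterm (j : ZMod N) :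
      Φ j * sinZeta (ZMod.toAddCircle j) 1 = π / 2 * Φ j - π / N * (j.val * Φ j) := by
    rcases eq_or_ne j 0 with rfl | hj
    · simp [hΦ.map_zero]
    · rw [sinZeta_toAddCircle_one hj]
      ring
  rw [LFunction_dft_of_odd hΦ, Finset.sum_congr rfl fun j _ ↦ hterm j, Finset.sum_sub_distrib,
    ← Finset.mul_sum, ← Finset.mul_sum, hΦ.sum_eq_zero]
  ring

lemma gaussSum_mul_LFunction_inv_one {χ : DirichletCharacter ℂ N} (hχ : χ.IsPrimitive)
    (hodd : χ.Odd) :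
    gaussSum χ ZMod.stdAddChar * χ⁻¹.LFunction 1 = -(π * I / N) * ∑ j, j.val * χ j := by
  have hdft : 𝓕 χ = fun k ↦ -gaussSum χ ZMod.stdAddChar * χ⁻¹ k := by
    ext k
    rw [hχ.fourierTransform_eq_inv_mul_gaussSum, ← neg_one_mul k, map_mul,
      MulChar.inv_apply_eq_inv', hodd]
    ring
  have h := LFunction_dft_one_of_odd hodd.to_fun
  rw [hdft] at h
  rw [neg_mul, ← h, DirichletCharacter.LFunction, ZMod.LFunction, ZMod.LFunction]
  simp_rw [mul_assoc, ← Finset.mul_sum]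
  ring

end OddLFunctions

section FirstMoment

open Complex Finset
open scoped Real

variable {N : ℕ} [NeZero N]

lemma sum_zmod_eq_add_sum_Icc_half {M : Type*} [AddCommMonoid M] (hN : Odd N) (F : ZMod N → M) :
    ∑ j, F j = F 0 + ∑ n ∈ Icc 1 (N / 2), (F n + F (-n)) := by
  obtain ⟨m, rfl⟩ : ∃ m, N = m + m + 1 := hN.imp fun m hm ↦ by rw [hm, two_mul]
  have hneg {n : ℕ} (hn : n ∈ range m) :
      ((m + (m - 1 - n) + 1 : ℕ) : ZMod (m + m + 1)) = -((n + 1 : ℕ) : ZMod (m + m + 1)) := by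
    refine eq_neg_of_add_eq_zero_left ?_
    have hsum : m + (m - 1 - n) + 1 + (n + 1) = m + m + 1 := by grind
    rw [← Nat.cast_add, hsum, ZMod.natCast_self]
  have hreflect : ∑ n ∈ range m, F ((m + n + 1 : ℕ)) = ∑ n ∈ range m, F (-((n + 1 : ℕ))) := by
    rw [← sum_range_reflect]
    exact sum_congr rfl fun n hn ↦ congrArg F (hneg hn)
  rw [sum_zmod_eq_sum_range, sum_range_succ', sum_range_add, hreflect, ← sum_add_distrib,
    Nat.cast_zero, add_comm, show (m + m + 1) / 2 = m by lia, range_eq_Ico,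
    sum_Ico_add' (fun n : ℕ ↦ F n + F (-n)) 0 m 1, zero_add, Ico_add_one_right_eq_Icc]

variable {R : Type*} [CommRing R]

lemma sum_val_mul_of_odd (hN : Odd N) (u : (ZMod N)ˣ) {Φ : ZMod N → R} (hΦ : Φ.Odd) :
    ∑ j, ((u * j : ZMod N).val : R) * Φ j
      = ∑ n ∈ Icc 1 (N / 2), (2 * ((u * n : ZMod N).val : R) - N) * Φ n := by
  rw [sum_zmod_eq_add_sum_Icc_half hN, mul_zero, ZMod.val_zero, Nat.cast_zero, zero_mul, zero_add]
  refine sum_congr rfl fun n hn ↦ ?_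
  have hn₀ : (u * n : ZMod N) ≠ 0 := by
    rw [Ne, Units.mul_right_eq_zero, ZMod.natCast_eq_zero_iff]
    exact Nat.not_dvd_of_pos_of_lt (mem_Icc.1 hn).1 (by grind)
  rw [mul_neg, ZMod.neg_val, if_neg hn₀, Nat.cast_sub (ZMod.val_le _), hΦ]
  ring

lemma inv_apply_mul_sum_val_mul (χ : DirichletCharacter R N) (u : (ZMod N)ˣ) :
    χ⁻¹ u * ∑ j, (j.val : R) * χ j = ∑ j, ((u * j : ZMod N).val : R) * χ j := by
  rw [← Equiv.sum_comp (Units.mulLeft u) fun j ↦ (j.val : R) * χ j, mul_sum]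
  refine sum_congr rfl fun j _ ↦ ?_
  have hu : χ⁻¹ u * χ u = 1 := by rw [← MulChar.mul_apply, inv_mul_cancel, MulChar.one_apply_coe]
  rw [Units.mulLeft_apply, map_mul]
  linear_combination ((u * j : ZMod N).val : R) * χ j * hu

lemma sub_inv_apply_two_mul_sum_val_mul (hN : Odd N) {χ : DirichletCharacter R N} (hodd : χ.Odd) :
    (2 - χ⁻¹ 2) * ∑ j, (j.val : R) * χ j = -N * ∑ n ∈ Icc 1 (N / 2), χ n := by
  let two := ZMod.unitOfCoprime 2 hN.coprime_two_left
  have htwo : (two : ZMod N) = 2 := ZMod.coe_unitOfCoprime 2 _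
  have hlt {n : ℕ} (hn : n ∈ Icc 1 (N / 2)) : 2 * n < N := by grind
  have hfold : ∑ j, (j.val : R) * χ j = ∑ n ∈ Icc 1 (N / 2), (2 * n - N) * χ n := by
    have h := sum_val_mul_of_odd hN 1 (DirichletCharacter.Odd.to_fun hodd)
    simp only [Units.val_one, one_mul] at h
    rw [h]
    refine sum_congr rfl fun n hn ↦ ?_
    rw [ZMod.val_cast_of_lt (by linarith [hlt hn])]
  have hdouble : χ⁻¹ 2 * ∑ j, (j.val : R) * χ j = ∑ n ∈ Icc 1 (N / 2), (4 * n - N) * χ n := by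
    rw [← htwo, inv_apply_mul_sum_val_mul, sum_val_mul_of_odd hN two
      (DirichletCharacter.Odd.to_fun hodd), htwo]
    refine sum_congr rfl fun n hn ↦ ?_
    rw [← Nat.cast_two (R := ZMod N), ← Nat.cast_mul, ZMod.val_cast_of_lt (hlt hn)]
    push_cast
    ring
  rw [sub_mul, hdouble, hfold, mul_sum, mul_sum, ← sum_sub_distrib]
  exact sum_congr rfl fun n _ ↦ by ring

theorem sum_Icc_half_eq_gaussSum_mul_LFunction (hN : Odd N) {χ : DirichletCharacter ℂ N}
    (hχ : χ.IsPrimitive) (hodd : χ.Odd) :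
    ∑ n ∈ Icc 1 (N / 2), χ n
      = gaussSum χ ZMod.stdAddChar / (π * I) * (2 - χ⁻¹ 2) * χ⁻¹.LFunction 1 := by
  have hN₀ : (N : ℂ) ≠ 0 := NeZero.ne _
  have hmoment := sub_inv_apply_two_mul_sum_val_mul hN hodd
  have hL := gaussSum_mul_LFunction_inv_one hχ hodd
  field_simp at hL ⊢
  refine mul_left_cancel₀ hN₀ ?_
  linear_combination π * I * hmoment - (2 - χ⁻¹ 2) * hL

end FirstMoment

section LegendreCharacter

open Complex

lemma isPrimitive_of_ne_one {R : Type*} [CommMonoidWithZero R] {p : ℕ} [Fact p.Prime]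
    {χ : DirichletCharacter R p} (hχ : χ ≠ 1) : χ.IsPrimitive :=
  ((Nat.dvd_prime Fact.out).1 χ.conductor_dvd_level).resolve_left
    (χ.eq_one_iff_conductor_eq_one.not.1 hχ)

/-- The Legendre symbol modulo `p` as a complex-valued Dirichlet character, the paper's `χ̃_p`.
It is reducible so that the lemmas on `quadraticChar` and `MulChar.ringHomComp` apply to it
directly. -/
noncomputable abbrev legendreCharacter (p : ℕ) [Fact p.Prime] : DirichletCharacter ℂ p :=
  (quadraticChar (ZMod p)).ringHomComp (Int.castRingHom ℂ)

lemma odd_legendreCharacter {p : ℕ} [Fact p.Prime] (h3 : p % 4 = 3) :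
    (legendreCharacter p).Odd := by
  have hp2 : ringChar (ZMod p) ≠ 2 := by
    rw [ZMod.ringChar_zmod_n]
    lia
  rw [DirichletCharacter.Odd, MulChar.ringHomComp_apply, quadraticChar_neg_one hp2, ZMod.card,
    ZMod.χ₄_nat_three_mod_four h3, map_neg, map_one]

lemma inv_legendreCharacter (p : ℕ) [Fact p.Prime] :
    (legendreCharacter p)⁻¹ = legendreCharacter p :=
  ((quadraticChar_isQuadratic _).comp _).inv

lemma isPrimitive_legendreCharacter {p : ℕ} [Fact p.Prime] (hp2 : p ≠ 2) :
    (legendreCharacter p).IsPrimitive :=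
  isPrimitive_of_ne_one <| (MulChar.ringHomComp_ne_one_iff (RingHom.injective_int _)).2 <|
    quadraticChar_ne_one <| by rwa [ZMod.ringChar_zmod_n]

lemma legendreCharacter_intCast (p : ℕ) [Fact p.Prime] (a : ℤ) :
    legendreCharacter p a = legendreSym p a :=
  rfl

lemma gaussSum_legendreCharacter {p : ℕ} [Fact p.Prime] (h3 : p % 4 = 3) :
    gaussSum (legendreCharacter p) ZMod.stdAddChar = √p * I := by
  have hI : (-I) ^ p = I := by
    rw [← Nat.div_add_mod p 4, h3, pow_add, pow_mul, neg_pow, I_pow_four]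
    simp [pow_succ]
  have hψ : ZMod.stdAddChar (N := p) ≠ 1 := by
    simpa using ZMod.isPrimitive_stdAddChar p one_ne_zero
  rw [gaussSum_quadraticChar_ringHomComp (by rw [ZMod.ringChar_zmod_n]; lia) hψ,
    sum_stdAddChar_sq, hI]
  linear_combination (√p / 2 : ℂ) * I_sq

end LegendreCharacter

lemma filter_range_pos_and_lt_half {N : ℕ} (hN : Odd N) :
    (Finset.range N).filter (fun n : ℕ ↦ 0 < n ∧ (n : ℚ) < (N : ℚ) / 2) =
      Finset.Icc 1 (N / 2) := by
  ext n
  have hlt : (n : ℚ) < (N : ℚ) / 2 ↔ 2 * n < N := by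
    rw [lt_div_iff₀' two_pos]
    exact_mod_cast Iff.rfl
  grind

/-- Theorem 7.2: if `p ≡ 3 mod 4` is prime, then
`∑_{0<n<p/2} χ_p(n) = (√p/π) (2 - χ_p(2)) L(1, χ̃_p)`, where `χ̃_p` is the Dirichlet character
of modulus `p` induced by the Legendre symbol. -/
theorem quadratic_excess_half_eq (p : ℕ) [hp : Fact p.Prime] (h3 : p % 4 = 3) :
    (((∑ n ∈ (Finset.range p).filter (fun n : ℕ => 0 < n ∧ (n : ℚ) < (p : ℚ) / 2),
        legendreSym p (n : ℤ) : ℤ)) : ℂ)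
      = ((Real.sqrt p / Real.pi : ℝ) : ℂ) * ((2 : ℂ) - ((legendreSym p 2 : ℤ) : ℂ)) *
        DirichletCharacter.LFunction
          ((quadraticChar (ZMod p)).ringHomComp (Int.castRingHom ℂ)) 1 := by
  have hodd : Odd p := Nat.odd_iff.2 (by lia)
  have hχ : (legendreCharacter p).IsPrimitive := isPrimitive_legendreCharacter (by lia)
  have hχ2 : legendreCharacter p 2 = legendreSym p 2 := mod_cast legendreCharacter_intCast p 2
  have hsum := sum_Icc_half_eq_gaussSum_mul_LFunction hodd hχ (odd_legendreCharacter h3)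
  rw [inv_legendreCharacter, hχ2, gaussSum_legendreCharacter h3,
    mul_div_mul_right _ _ Complex.I_ne_zero] at hsum
  rw [filter_range_pos_and_lt_half hodd, Int.cast_sum, Complex.ofReal_div, ← hsum]
  exact Finset.sum_congr rfl fun n _ ↦ by rw [← legendreCharacter_intCast, Int.cast_natCast]
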